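/- Let x_0,…,x_N be points of a set Ω and φ_0,…,φ_N : Ω → ℝ, and let μ_0,…,μ_N ∈ ℝ. Let w ∈ ℝ^{N+1} satisfy Σ_{k=0}^N w_k φ_j(x_k) = μ_j for all j = 0,…,N, and let w' ∈ ℝ^{N+1} satisfy w'_k ≥ 0 for all k, w'_{k_0} = 0 for some index k_0, and Σ_{k=0}^N w'_k φ_j(x_k) = μ_j for all j = 0,…,N−1. Define c = w − w' ∈ ℝ^{N+1}. Then: (i) Σ_{k=0}^N c_k φ_j(x_k) = 0 for j = 0,…,N−1; (ii) if c_{k_0} > 0 then min{ w_k / c_k : c_k > 0 } = 1; (iii) if c_{k_0} < 0 then max{ w_k / c_k : c_k < 0 } = 1. -/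

import Mathlib

/-- The weights `w` at the nodes `x` reproduce the moments `μ` of the basis functions `φ`.
The null vectors of the Vandermonde system of `x` and `φ` are the weights exact for `μ = 0`. -/
def IsExactWeight {ι J Ω R : Type*} [Fintype ι] [NonUnitalNonAssocSemiring R]
    (x : ι → Ω) (φ : J → Ω → R) (μ : J → R) (w : ι → R) : Prop :=
  ∀ j, ∑ k, w k * φ j (x k) = μ j

theorem IsExactWeight.sub {ι J Ω R : Type*} [Fintype ι] [NonUnitalNonAssocRing R]
    {x : ι → Ω} {φ : J → Ω → R} {μ ν : J → R} {w v : ι → R}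
    (hw : IsExactWeight x φ μ w) (hv : IsExactWeight x φ ν v) :
    IsExactWeight x φ (μ - ν) (w - v) := fun j => by
  simp only [Pi.sub_apply, sub_mul, Finset.sum_sub_distrib, hw j, hv j]

section Ratio

variable {ι K : Type*} [Field K] [LinearOrder K] [IsStrictOrderedRing K]
  {w c : ι → K} {α : K} {k₀ : ι}

theorem isLeast_div_of_mul_le (hle : ∀ k, 0 < c k → α * c k ≤ w k)
    (hk₀ : α * c k₀ = w k₀) (hpos : 0 < c k₀) :
    IsLeast ((fun k => w k / c k) '' {k | 0 < c k}) α := by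
  refine ⟨⟨k₀, hpos, (div_eq_iff hpos.ne').2 hk₀.symm⟩, ?_⟩
  rintro _ ⟨k, hk, rfl⟩
  exact (le_div_iff₀ hk).2 (hle k hk)

theorem isGreatest_div_of_mul_le (hle : ∀ k, c k < 0 → α * c k ≤ w k)
    (hk₀ : α * c k₀ = w k₀) (hneg : c k₀ < 0) :
    IsGreatest ((fun k => w k / c k) '' {k | c k < 0}) α := by
  refine ⟨⟨k₀, hneg, (div_eq_iff hneg.ne).2 hk₀.symm⟩, ?_⟩
  rintro _ ⟨k, hk, rfl⟩
  exact (div_le_iff_of_neg hk).2 (hle k hk)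

end Ratio

theorem removal_weights_from_null_vector_general {ι J Ω K : Type*} [Fintype ι]
    [Field K] [LinearOrder K] [IsStrictOrderedRing K]
    {x : ι → Ω} {φ : J → Ω → K} {μ : J → K} {w w' : ι → K} {k₀ : ι}
    (hw : IsExactWeight x φ μ w) (hw' : IsExactWeight x φ μ w')
    (hnonneg : ∀ k, 0 ≤ w' k) (hk₀ : w' k₀ = 0) :
    IsExactWeight x φ 0 (w - w') ∧
    (0 < w k₀ - w' k₀ →
      IsLeast ((fun k => w k / (w k - w' k)) '' {k | 0 < w k - w' k}) 1) ∧
    (w k₀ - w' k₀ < 0 →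
      IsGreatest ((fun k => w k / (w k - w' k)) '' {k | w k - w' k < 0}) 1) := by
  have hle (k : ι) : 1 * (w k - w' k) ≤ w k := by
    simpa only [one_mul] using sub_le_self (w k) (hnonneg k)
  have heq : 1 * (w k₀ - w' k₀) = w k₀ := by rw [hk₀, sub_zero, one_mul]
  have hnull : IsExactWeight x φ 0 (w - w') := by
    simpa only [sub_self] using hw.sub hw'
  exact ⟨hnull, isLeast_div_of_mul_le (fun k _ => hle k) heq,
    isGreatest_div_of_mul_le (fun k _ => hle k) heq⟩

/-- Implication (2 ⇒ 3) of Lemma 3.2: if `w` is exact for all `N + 1` moments and `w'` is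
a nonnegative weight vector vanishing at `k₀` that is exact for the first `N` moments,
then `c = w - w'` is a null vector of the reduced Vandermonde system, and (`α = 1` being
the corresponding scaling) `min { w k / c k : c k > 0 } = 1` if `c k₀ > 0`, while
`max { w k / c k : c k < 0 } = 1` if `c k₀ < 0`. -/
theorem removal_weights_from_null_vector {Ω : Type*} {N : ℕ}
    (x : Fin (N + 1) → Ω) (φ : Fin (N + 1) → Ω → ℝ) (μ : Fin (N + 1) → ℝ)
    (w w' : Fin (N + 1) → ℝ) (k₀ : Fin (N + 1))
    (hw : ∀ j, ∑ k, w k * φ j (x k) = μ j)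
    (hw' : ∀ k, 0 ≤ w' k) (hk₀ : w' k₀ = 0)
    (hw'ex : ∀ j : Fin N, ∑ k, w' k * φ j.castSucc (x k) = μ j.castSucc) :
    (∀ j : Fin N, ∑ k, (w k - w' k) * φ j.castSucc (x k) = 0) ∧
    (0 < w k₀ - w' k₀ →
      IsLeast ((fun k => w k / (w k - w' k)) '' {k | 0 < w k - w' k}) 1) ∧
    (w k₀ - w' k₀ < 0 →
      IsGreatest ((fun k => w k / (w k - w' k)) '' {k | w k - w' k < 0}) 1) :=
  removal_weights_from_null_vector_general (φ := fun j : Fin N => φ j.castSucc)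
    (fun j => hw j.castSucc) hw'ex hw' hk₀
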